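/- Let g and h be prefix replacement permutations of the Cantor set C = ℕ → Bool, suppose g has infinite order, and let r, s be integers such that h⁻¹ ∘ gʳ ∘ h = gˢ. Then |r| = |s|. -/

import Mathlib

/-!
A prefix replacement map `f` acts on cones: for every sufficiently long word `u` there is a word `v`
with `f (u⌢ξ) = v⌢ξ` for all `ξ` (`MapsCone f u v`), and the lengths of `u` and `v` differ by a
bounded amount. `ConeBound D f` records this with a constant `D`; these constants add under
composition, so `g ^ j` has the constant `D * |j|`.

The first ingredient (`exists_expanding`) is that an element `g` of infinite order has a power
`g ^ k`, `k : ℤ`, that maps some cone `w` to a subcone `w ++ v` with `v ≠ []`. Indeed, view the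
orbit of a long word under `g` as a run of a stack machine that only reads the top `D` letters. If
the height of the stack rises a lot, consider for each of many levels the last time the height is
below that level. By the pigeonhole principle the same top word `w` is seen at two of these times,
and as the machine never looks below `w` in between, a power of `g` maps `w` to `w ++ v` (`pump`).
The same applies to a large drop, by reversing time. If neither happens, the heights stay bounded
along orbits of words of some fixed large length, so these orbits are eventually periodic and a
power of `g` is trivial.

For the second ingredient, iterating the relation gives `g ^ (k r^N) = h^N g ^ (k s^N) h^(-N)`. The
right-hand side, up to inversion, maps some cone `z` to `z ++ v^(|s|^N)`: conjugation does not
affect the amount of expansion (`MapsCone.conj`). The left-hand side changes lengths by at most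
`D |k| |r|^N`. Thus `|s|^N ≤ D |k| |r|^N` for all `N`, which forces `|s| ≤ |r|`, and the converse
inequality follows by symmetry.
-/

/-- The Cantor set `C = ℕ → Bool`. -/
abbrev Cantor : Type := ℕ → Bool

/-- Prepend a finite word `a` to an element `ξ` of the Cantor set. -/
def prepend (a : List Bool) (ξ : Cantor) : Cantor :=
  fun n => if h : n < a.length then a.get ⟨n, h⟩ else ξ (n - a.length)

/-- A finite set of finite binary words is a complete antichain if distinct elements
are incomparable in the prefix order and every `ξ : ℕ → Bool` has an initial segment
lying in it. -/
def IsCompleteAntichain (A : Set (List Bool)) : Prop :=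
  A.Finite ∧
  (∀ a ∈ A, ∀ b ∈ A, a ≠ b → ¬ a <+: b) ∧
  (∀ ξ : Cantor, ∃ n : ℕ, (List.ofFn fun i : Fin n => ξ i) ∈ A)

/-- A permutation of the Cantor set is a prefix replacement map if it is given by
a bijection between two finite complete antichains of prefixes. -/
def IsPrefixReplacement (g : Equiv.Perm Cantor) : Prop :=
  ∃ A B : Set (List Bool), IsCompleteAntichain A ∧ IsCompleteAntichain B ∧
    ∃ σ : A ≃ B, ∀ (a : A) (ξ : Cantor), g (prepend a ξ) = prepend (σ a : List Bool) ξ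

/-! ### Prepending words -/

theorem prepend_nil (ξ : Cantor) : prepend [] ξ = ξ := by
  funext n; simp [prepend]

theorem prepend_append (a b : List Bool) (ξ : Cantor) :
    prepend (a ++ b) ξ = prepend a (prepend b ξ) := by
  funext n
  simp only [prepend, List.get_eq_getElem, List.length_append]
  by_cases h1 : n < a.length
  · have : n < a.length + b.length := by omega
    simp [h1, this]
  · by_cases h2 : n < a.length + b.length
    · have : n - a.length < b.length := by omega
      simp [h1, h2, this, List.getElem_append]
    · have : ¬ (n - a.length < b.length) := by omega
      simp [h1, h2, this, Nat.sub_sub]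

theorem prepend_apply_of_lt (a : List Bool) (ξ : Cantor) (n : ℕ) (h : n < a.length) :
    prepend a ξ n = a[n] := by
  simp [prepend, h]

theorem length_le_of_prepend_eq {u v : List Bool} (h : ∀ ξ, prepend u ξ = prepend v ξ) :
    v.length ≤ u.length := by
  by_contra! hlt
  -- The letter of `v` at position `u.length` would equal the first letter of every `ξ`.
  have key : ∀ b : Bool, v[u.length] = b := by
    intro b
    have := congrFun (h (fun _ => b)) u.length
    rw [prepend_apply_of_lt v _ _ hlt] at this
    rw [← this]
    simp [prepend]
  have h1 := key true
  rw [key false] at h1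
  exact absurd h1 (by simp)

theorem prepend_injective {u v : List Bool} (h : ∀ ξ, prepend u ξ = prepend v ξ) : u = v := by
  have hl : u.length = v.length :=
    le_antisymm (length_le_of_prepend_eq fun ξ => (h ξ).symm) (length_le_of_prepend_eq h)
  refine List.ext_getElem hl fun n h1 h2 => ?_
  have := congrFun (h (fun _ => true)) n
  rwa [prepend_apply_of_lt u _ _ h1, prepend_apply_of_lt v _ _ h2] at this

theorem prepend_ofFn (x : Cantor) (M : ℕ) :
    prepend (List.ofFn fun i : Fin M => x i) (fun n => x (n + M)) = x := by
  funext n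
  by_cases h : n < M
  · simp [prepend, h]
  · have : n - M + M = n := by omega
    simp [prepend, h, this]

/-! ### Action on cones -/

/-- `f` maps the cone of points with prefix `u` to the cone with prefix `v`, by replacing the
prefix. -/
def MapsCone (f : Equiv.Perm Cantor) (u v : List Bool) : Prop :=
  ∀ ξ, f (prepend u ξ) = prepend v ξ

/-- Every cone given by a word of length at least `D` is mapped to a cone by prefix replacement, and
the length of the prefix changes by at most `D`. -/
def ConeBound (D : ℕ) (f : Equiv.Perm Cantor) : Prop :=
  ∀ u : List Bool, D ≤ u.length →
    ∃ v, MapsCone f u v ∧ v.length ≤ u.length + D ∧ u.length ≤ v.length + D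

namespace MapsCone

variable {f f' : Equiv.Perm Cantor} {u v w : List Bool}

theorem one (u : List Bool) : MapsCone 1 u u := fun _ => rfl

theorem comp (h' : MapsCone f' v w) (h : MapsCone f u v) : MapsCone (f' * f) u w := by
  intro ξ
  rw [Equiv.Perm.mul_apply, h, h']

theorem inv (h : MapsCone f u v) : MapsCone f⁻¹ v u := by
  intro ξ
  rw [← h]; exact Equiv.symm_apply_apply f _

theorem append (h : MapsCone f u v) (t : List Bool) : MapsCone f (u ++ t) (v ++ t) := by
  intro ξ
  rw [prepend_append, prepend_append, h]

theorem unique (h : MapsCone f u v) (h' : MapsCone f u w) : v = w :=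
  prepend_injective fun ξ => by rw [← h, ← h']

end MapsCone

namespace ConeBound

variable {D D' : ℕ} {f f' : Equiv.Perm Cantor}

theorem mono (h : ConeBound D f) (hD : D ≤ D') : ConeBound D' f := by
  intro u hu
  obtain ⟨v, hv, h1, h2⟩ := h u (by omega)
  exact ⟨v, hv, by omega, by omega⟩

theorem one : ConeBound 0 1 := fun u _ => ⟨u, MapsCone.one u, by omega, by omega⟩

theorem mul (h' : ConeBound D' f') (h : ConeBound D f) : ConeBound (D' + D) (f' * f) := by
  intro u hu
  obtain ⟨v, hv, h1, h2⟩ := h u (by omega)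
  obtain ⟨w, hw, h3, h4⟩ := h' v (by omega)
  exact ⟨w, hw.comp hv, by omega, by omega⟩

theorem pow (h : ConeBound D f) (n : ℕ) : ConeBound (D * n) (f ^ n) := by
  induction n with
  | zero => simpa using one
  | succ n ih => rw [pow_succ, Nat.mul_succ]; exact ih.mul h

theorem zpow (h : ConeBound D f) (hi : ConeBound D f⁻¹) (n : ℤ) :
    ConeBound (D * n.natAbs) (f ^ n) := by
  rcases Int.natAbs_eq n with hn | hn
  · have := h.pow n.natAbs
    rwa [← zpow_natCast, ← hn] at this
  · have := hi.pow n.natAbs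
    rwa [inv_pow, ← zpow_natCast, ← zpow_neg, ← hn] at this

end ConeBound

theorem IsPrefixReplacement.inv {g : Equiv.Perm Cantor} (hg : IsPrefixReplacement g) :
    IsPrefixReplacement g⁻¹ := by
  obtain ⟨A, B, hA, hB, σ, hσ⟩ := hg
  refine ⟨B, A, hB, hA, σ.symm, fun b ξ => ?_⟩
  have := hσ (σ.symm b) ξ
  rw [Equiv.apply_symm_apply] at this
  rw [← this]; exact Equiv.symm_apply_apply g _

theorem IsPrefixReplacement.exists_coneBound {g : Equiv.Perm Cantor}
    (hg : IsPrefixReplacement g) : ∃ D, ConeBound D g := by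
  obtain ⟨A, B, hA, hB, σ, hσ⟩ := hg
  obtain ⟨DA, hDA⟩ := (hA.1.image List.length).bddAbove
  obtain ⟨DB, hDB⟩ := (hB.1.image List.length).bddAbove
  refine ⟨DA + DB, fun u hu => ?_⟩
  obtain ⟨n, hn⟩ := hA.2.2 (prepend u fun _ => false)
  have hn1 : n ≤ DA := by
    have := hDA ⟨_, hn, rfl⟩
    simpa using this
  have htake : (List.ofFn fun i : Fin n => (prepend u fun _ => false) i) = u.take n := by
    apply List.ext_getElem
    · simp; omega
    · intro i h1 h2
      simp only [List.length_ofFn] at h1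
      simp [prepend_apply_of_lt u _ i (by omega)]
  rw [htake] at hn
  have hb : (σ ⟨_, hn⟩ : List Bool).length ≤ DB := hDB ⟨_, (σ ⟨_, hn⟩).2, rfl⟩
  have hm : MapsCone g (u.take n) (σ ⟨_, hn⟩) := fun ξ => hσ ⟨_, hn⟩ ξ
  refine ⟨(σ ⟨_, hn⟩ : List Bool) ++ u.drop n, ?_, ?_, ?_⟩
  · have := hm.append (u.drop n)
    rwa [List.take_append_drop] at this
  · simp; omega
  · simp; omega

/-! ### Expanding cones for elements of infinite order -/

/-- The height of a sequence with upward jumps at most `D` that climbs beyond `L` is in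
`(L - D, L]` at the last time it is at most `L`. -/
theorem exists_last_time {D n L : ℕ} {ht : ℕ → ℕ} (hjump : ∀ i < n, ht (i + 1) ≤ ht i + D)
    (h0 : ht 0 ≤ L) (hn : L < ht n) :
    ∃ m ≤ n, L < ht m + D ∧ ht m ≤ L ∧ ∀ j, m < j → j ≤ n → ht m < ht j := by
  have hm : ht (Nat.findGreatest (fun i => ht i ≤ L) n) ≤ L :=
    Nat.findGreatest_spec (P := fun i => ht i ≤ L) (Nat.zero_le n) h0
  have hle : Nat.findGreatest (fun i => ht i ≤ L) n ≤ n := Nat.findGreatest_le n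
  have hlast : ∀ j, Nat.findGreatest (fun i => ht i ≤ L) n < j → j ≤ n → L < ht j :=
    fun j h1 h2 => not_le.mp (Nat.findGreatest_is_greatest (P := fun i => ht i ≤ L) h1 h2)
  generalize Nat.findGreatest (fun i => ht i ≤ L) n = m at hm hle hlast
  have hmn : m < n := by
    rcases hle.lt_or_eq with h | h
    · exact h
    · subst h; omega
  have h1 := hlast (m + 1) (by omega) (by omega)
  have h2 := hjump m hmn
  exact ⟨m, hle, by omega, hm, fun j h3 h4 => by have := hlast j h3 h4; omega⟩

/-- If the lengths along a stretch of an orbit of words never drop to that of the first word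
`w ++ t` again, where `w` is long enough to be mapped by `f`, then the orbit never touches the
suffix `t`. -/
theorem orbit_keeps_suffix {D : ℕ} {f : Equiv.Perm Cantor} (hf : ConeBound D f)
    {x : ℕ → List Bool} {n : ℕ} (hx : ∀ i < n, MapsCone f (x i) (x (i + 1)))
    {w t : List Bool} (hw : w.length = D) (h0 : x 0 = w ++ t)
    (hht : ∀ j, 0 < j → j ≤ n → (x 0).length < (x j).length) (j : ℕ) (hj : j ≤ n) :
    ∃ b, D ≤ b.length ∧ x j = b ++ t ∧ MapsCone (f ^ j) w b := by
  induction j with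
  | zero => exact ⟨w, hw.ge, h0, by simpa using MapsCone.one w⟩
  | succ j ih =>
    obtain ⟨b, hb, hxb, hm⟩ := ih (by omega)
    obtain ⟨c, hc, -, -⟩ := hf b hb
    have hxc : x (j + 1) = c ++ t := by
      have h1 := hx j (by omega)
      rw [hxb] at h1
      exact h1.unique (hc.append t)
    refine ⟨c, ?_, hxc, ?_⟩
    · have := hht (j + 1) (by omega) hj
      rw [hxc, h0] at this
      simp only [List.length_append] at this
      omega
    · rw [pow_succ']; exact hc.comp hm

/-- Pumping: a large increase of length along an orbit of words yields an expanding cone. The bound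
comes from the `2 ^ D` words of length `D` and the jumps of length at most `D`. -/
theorem pump {D : ℕ} {f : Equiv.Perm Cantor} (hf : ConeBound D f)
    {x : ℕ → List Bool} {n : ℕ} (hx : ∀ i < n, MapsCone f (x i) (x (i + 1)))
    (hlen : ∀ i ≤ n, D ≤ (x i).length)
    (hlarge : (x 0).length + D * 2 ^ D < (x n).length) :
    ∃ (k : ℕ) (w v : List Bool), v ≠ [] ∧ MapsCone (f ^ k) w (w ++ v) := by
  have hjump : ∀ i < n, (x (i + 1)).length ≤ (x i).length + D := by
    intro i hi
    obtain ⟨v, hv, h1, -⟩ := hf (x i) (hlen i hi.le)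
    rwa [hv.unique (hx i hi)] at h1
  have hlevel : ∀ i : Fin (2 ^ D + 1), ∃ m ≤ n,
      (x 0).length + D * i < (x m).length + D ∧ (x m).length ≤ (x 0).length + D * i ∧
      ∀ j, m < j → j ≤ n → (x m).length < (x j).length := by
    intro i
    have : D * (i : ℕ) ≤ D * 2 ^ D := Nat.mul_le_mul_left _ (by omega)
    exact exists_last_time (ht := fun i => (x i).length) hjump (by simp) (by omega)
  choose m hmn hm1 hm2 hm3 using hlevel
  -- The word of length `D` on top at the last time below each level.
  let top : Fin (2 ^ D + 1) → List.Vector Bool D := fun i =>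
    ⟨(x (m i)).take D, by simpa using hlen _ (hmn i)⟩
  obtain ⟨i, i', hne, htop⟩ : ∃ i i', i ≠ i' ∧ top i = top i' :=
    Fintype.exists_ne_map_eq_of_card_lt top (by simp [card_vector])
  wlog hlt : i < i' generalizing i i'
  · exact this i' i hne.symm htop.symm (by omega)
  have htop' : (x (m i)).take D = (x (m i')).take D := congrArg Subtype.val htop
  have hheight : (x (m i)).length < (x (m i')).length := by
    have h1 := hm1 i'
    have h2 := hm2 i
    have : D * (i : ℕ) + D ≤ D * i' := by
      rw [← Nat.mul_succ]; exact Nat.mul_le_mul_left _ hlt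
    omega
  have hmm : m i < m i' := by
    by_contra! h
    rcases h.lt_or_eq with h | h
    · have := hm3 i' _ h (hmn i); omega
    · rw [h] at hheight; omega
  have hwlen : ((x (m i)).take D).length = D := by simpa using hlen _ (hmn i)
  have hmi' := hmn i'
  obtain ⟨b, hb, hxb, hmap⟩ := orbit_keeps_suffix hf (x := fun j => x (m i + j))
    (n := m i' - m i) (fun j hj => hx (m i + j) (by omega)) hwlen
    (t := (x (m i)).drop D) (by simp)
    (fun j h1 h2 => hm3 i _ (by omega) (by omega)) (m i' - m i) le_rfl
  rw [show m i + (m i' - m i) = m i' by omega] at hxb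
  have hbw : b.take D = (x (m i)).take D := by
    rw [htop', hxb, List.take_append_of_le_length hb]
  refine ⟨m i' - m i, (x (m i)).take D, b.drop D, ?_, ?_⟩
  · intro h
    have h1 : b.length ≤ D := List.drop_eq_nil_iff.mp h
    have h2 := congrArg List.length hxb
    have h3 := hlen _ (hmn i)
    simp only [List.length_append, List.length_drop] at h2
    omega
  · rw [← hbw, List.take_append_drop, hbw]; exact hmap

theorem exists_expanding {D : ℕ} {g : Equiv.Perm Cantor} (hg : ConeBound D g)
    (hgi : ConeBound D g⁻¹) (hord : ¬ IsOfFinOrder g) :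
    ∃ (k : ℤ) (w v : List Bool), v ≠ [] ∧ MapsCone (g ^ k) w (w ++ v) := by
  by_contra hno
  apply hord
  have up : ∀ (x : ℕ → List Bool) (n : ℕ), (∀ i < n, MapsCone g (x i) (x (i + 1))) →
      (∀ i ≤ n, D ≤ (x i).length) → (x n).length ≤ (x 0).length + D * 2 ^ D := by
    intro x n hx hlen
    by_contra! hlarge
    obtain ⟨k, w, v, hv, hm⟩ := pump hg hx hlen hlarge
    exact hno ⟨k, w, v, hv, by simpa using hm⟩
  have down : ∀ (x : ℕ → List Bool) (n : ℕ), (∀ i < n, MapsCone g (x i) (x (i + 1))) →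
      (∀ i ≤ n, D ≤ (x i).length) → (x 0).length ≤ (x n).length + D * 2 ^ D := by
    intro x n hx hlen
    by_contra! hlarge
    obtain ⟨k, w, v, hv, hm⟩ := pump hgi (x := fun i => x (n - i)) (n := n)
      (fun i hi => by
        have := (hx (n - (i + 1)) (by omega)).inv
        rwa [show n - (i + 1) + 1 = n - i by omega] at this)
      (fun i hi => hlen _ (by omega)) (by simpa using hlarge)
    exact hno ⟨-k, w, v, hv, by simpa using hm⟩
  choose F hF hF1 hF2 using hg
  -- A word of length `M` has room for the largest possible drop and one further step.
  set M := 2 * D + D * 2 ^ D with hM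
  have periodic : ∀ u : List Bool, u.length = M → ∃ k : ℕ, 0 < k ∧ MapsCone (g ^ k) u u := by
    intro u hu
    let x : ℕ → List Bool := fun n =>
      Nat.rec u (fun _ y => if h : D ≤ y.length then F y h else y) n
    have hx0 : x 0 = u := rfl
    have hxs : ∀ n (h : D ≤ (x n).length), x (n + 1) = F (x n) h := fun n h => dif_pos h
    have hlen : ∀ n, ∀ i ≤ n, D ≤ (x i).length := by
      intro n
      induction n with
      | zero => intro i hi; obtain rfl : i = 0 := by omega
                rw [hx0]; omega
      | succ n ih =>
        intro i hi
        rcases hi.lt_or_eq with h | rfl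
        · exact ih i (by omega)
        · have h1 := down x n (fun i hi => by rw [hxs i (ih i hi.le)]; exact hF _ _) ih
          have h2 := hF2 (x n) (ih n le_rfl)
          rw [hxs n (ih n le_rfl)]
          rw [hx0] at h1
          omega
    have hx : ∀ i, MapsCone g (x i) (x (i + 1)) := fun i => by
      rw [hxs i (hlen i i le_rfl)]; exact hF _ _
    have hbd : ∀ n, (x n).length < M + D * 2 ^ D + 1 := by
      intro n
      have := up x n (fun i _ => hx i) (hlen n)
      rw [hx0] at this
      omega
    have hfin : Set.Finite {l : List Bool | l.length < M + D * 2 ^ D + 1} :=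
      List.finite_length_lt Bool _
    have := hfin.to_subtype
    obtain ⟨i, j, hne, hij⟩ := Finite.exists_ne_map_eq_of_infinite
      (fun n => (⟨x n, hbd n⟩ : {l : List Bool | l.length < M + D * 2 ^ D + 1}))
    wlog hlt : i < j generalizing i j
    · exact this j i hne.symm hij.symm (by omega)
    have hij' : x i = x j := congrArg Subtype.val hij
    have hpow : ∀ n, MapsCone (g ^ n) u (x n) := by
      intro n
      induction n with
      | zero => rw [pow_zero, hx0]; exact MapsCone.one u
      | succ n ih => rw [pow_succ']; exact (hx n).comp ih
    refine ⟨j - i, by omega, ?_⟩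
    have h1 := (hpow i).inv.comp (hij' ▸ hpow j)
    have h2 : (g ^ i)⁻¹ * g ^ j = g ^ (j - i) := by
      rw [inv_mul_eq_iff_eq_mul, ← pow_add]; congr 1; omega
    rwa [h2] at h1
  choose k hk0 hk using fun u : Fin M → Bool => periodic (List.ofFn u) (by simp)
  rw [isOfFinOrder_iff_pow_eq_one]
  refine ⟨∏ u, k u, Finset.prod_pos fun u _ => hk0 u, ?_⟩
  ext1 y
  obtain ⟨c, hc⟩ := Finset.dvd_prod_of_mem k (Finset.mem_univ fun i : Fin M => y i)
  have hfix : (g ^ k fun i : Fin M => y i) y = y := by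
    have := hk (fun i : Fin M => y i) (fun n => y (n + M))
    rwa [prepend_ofFn] at this
  rw [hc, pow_mul, Equiv.Perm.one_apply]
  exact Equiv.Perm.pow_apply_eq_self_of_apply_eq_self hfix c

/-! ### Conjugation and growth -/

/-- The word `v` repeated `n` times. -/
def wordPow (v : List Bool) (n : ℕ) : List Bool := (List.replicate n v).flatten

theorem length_wordPow (v : List Bool) (n : ℕ) : (wordPow v n).length = n * v.length := by
  simp [wordPow]

theorem wordPow_succ (v : List Bool) (n : ℕ) : wordPow v (n + 1) = v ++ wordPow v n := by
  simp [wordPow, List.replicate_succ]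

theorem wordPow_succ' (v : List Bool) (n : ℕ) : wordPow v (n + 1) = wordPow v n ++ v := by
  simp [wordPow, List.replicate_succ']

theorem MapsCone.pow_expanding {f : Equiv.Perm Cantor} {w v : List Bool}
    (h : MapsCone f w (w ++ v)) (n : ℕ) : MapsCone (f ^ n) w (w ++ wordPow v n) := by
  induction n with
  | zero => simpa [wordPow] using MapsCone.one w
  | succ n ih =>
    rw [pow_succ', wordPow_succ, ← List.append_assoc]
    exact (h.append _).comp ih

/-- Conjugation preserves the word `v` by which a cone is expanded. -/
theorem MapsCone.conj {D : ℕ} {f H : Equiv.Perm Cantor} (hH : ConeBound D H) {w v : List Bool}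
    (hv : v ≠ []) (h : MapsCone f w (w ++ v)) :
    ∃ z, MapsCone (H * f * H⁻¹) z (z ++ v) := by
  -- The word `w ++ v^D` is long enough to be mapped by `H`.
  have hlen : D ≤ (w ++ wordPow v D).length := by
    have := Nat.le_mul_of_pos_right D (List.length_pos_iff.mpr hv)
    simp only [List.length_append, length_wordPow]
    omega
  obtain ⟨z, hz, -, -⟩ := hH _ hlen
  refine ⟨z, MapsCone.comp (MapsCone.comp (hz.append v) ?_) hz.inv⟩
  have := h.append (wordPow v D)
  rwa [List.append_assoc, ← wordPow_succ, wordPow_succ', ← List.append_assoc] at this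

theorem MapsCone.length_le {D : ℕ} {f : Equiv.Perm Cantor} (hf : ConeBound D f)
    {z v : List Bool} (h : MapsCone f z (z ++ v)) : v.length ≤ D := by
  obtain ⟨y, hy, h1, -⟩ := hf (z ++ List.replicate D true) (by simp)
  rw [hy.unique (h.append _)] at h1
  simp only [List.length_append] at h1
  omega

theorem zpow_conj_iterate {G : Type*} [Group G] {g h : G} {r s : ℤ}
    (hc : h * g ^ s * h⁻¹ = g ^ r) (N : ℕ) (k : ℤ) :
    h ^ N * g ^ (k * s ^ N) * (h ^ N)⁻¹ = g ^ (k * r ^ N) := by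
  have step : ∀ j : ℤ, h * g ^ (s * j) * h⁻¹ = g ^ (r * j) := by
    intro j
    rw [zpow_mul, ← conj_zpow, hc, ← zpow_mul]
  induction N generalizing k with
  | zero => simp
  | succ N ih =>
    calc h ^ (N + 1) * g ^ (k * s ^ (N + 1)) * (h ^ (N + 1))⁻¹
        = h * (h ^ N * g ^ ((k * s) * s ^ N) * (h ^ N)⁻¹) * h⁻¹ := by
          rw [show k * s ^ (N + 1) = (k * s) * s ^ N by ring, pow_succ']
          group
      _ = g ^ (k * r ^ (N + 1)) := by
          rw [ih (k * s), show k * s * r ^ N = s * (k * r ^ N) by ring, step]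
          congr 1; ring

theorem le_of_pow_le_mul_pow {a b C : ℕ} (h : ∀ N : ℕ, a ^ N ≤ C * b ^ N) : a ≤ b := by
  by_contra! hlt
  have ha : (0 : ℝ) < a := by exact_mod_cast (Nat.zero_le b).trans_lt hlt
  have hlt1 : (b / a : ℝ) < 1 := by
    rw [div_lt_one ha]; exact_mod_cast hlt
  obtain ⟨N, hN⟩ := exists_pow_lt_of_lt_one (show (0 : ℝ) < 1 / (C + 1) by positivity) hlt1
  rw [div_pow, div_lt_div_iff₀ (by positivity) (by positivity)] at hN
  have h1 : (a : ℝ) ^ N ≤ C * b ^ N := by exact_mod_cast h N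
  have h2 : (0 : ℝ) ≤ b ^ N := by positivity
  nlinarith

theorem natAbs_le_of_conj {g h : Equiv.Perm Cantor} (hg : IsPrefixReplacement g)
    (hh : IsPrefixReplacement h) (hord : ¬ IsOfFinOrder g) {r s : ℤ}
    (hc : h * g ^ s * h⁻¹ = g ^ r) : s.natAbs ≤ r.natAbs := by
  obtain ⟨D₁, hD₁⟩ := hg.exists_coneBound
  obtain ⟨D₂, hD₂⟩ := hg.inv.exists_coneBound
  obtain ⟨E, hE⟩ := hh.exists_coneBound
  have hD := hD₁.mono (Nat.le_add_right D₁ D₂)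
  have hDi := hD₂.mono (Nat.le_add_left D₂ D₁)
  rcases eq_or_ne s 0 with rfl | hs
  · simp
  obtain ⟨k, w, v, hv, hm⟩ := exists_expanding hD hDi hord
  refine le_of_pow_le_mul_pow (C := (D₁ + D₂) * k.natAbs) fun N => ?_
  have hpos : 0 < s.natAbs ^ N := pow_pos (Int.natAbs_pos.mpr hs) N
  have hvpos := List.length_pos_iff.mpr hv
  have hV : wordPow v (s.natAbs ^ N) ≠ [] := by
    rw [← List.length_pos_iff, length_wordPow]; positivity
  -- The sign of `s ^ N` decides whether a power of `g ^ k` or of its inverse expands.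
  obtain ⟨k', hk', hm'⟩ : ∃ k' : ℤ, k'.natAbs = k.natAbs ∧
      MapsCone (g ^ (k' * s ^ N)) w (w ++ wordPow v (s.natAbs ^ N)) := by
    have h1 := hm.pow_expanding (s.natAbs ^ N)
    rw [← zpow_natCast, ← zpow_mul, ← Int.natAbs_pow] at h1
    rw [← Int.natAbs_pow]
    rcases Int.natAbs_eq (s ^ N) with h2 | h2
    · exact ⟨k, rfl, by rwa [← h2] at h1⟩
    · refine ⟨-k, by simp, ?_⟩
      rwa [show k * ((s ^ N).natAbs : ℤ) = -k * s ^ N by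
        conv_rhs => rw [h2]
        ring] at h1
  obtain ⟨z, hz⟩ := hm'.conj (hE.pow N) hV
  rw [zpow_conj_iterate hc] at hz
  have hle := hz.length_le (hD.zpow hDi _)
  rw [length_wordPow, Int.natAbs_mul, Int.natAbs_pow, hk', ← mul_assoc] at hle
  exact (Nat.le_mul_of_pos_right _ hvpos).trans hle

/-- If `g` is a prefix replacement permutation of the Cantor set of infinite order,
`h` is a prefix replacement permutation, and `h⁻¹ ∘ gʳ ∘ h = gˢ`, then `|r| = |s|`. -/
theorem abs_eq_abs_of_conj_zpow (g h : Equiv.Perm Cantor)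
    (hg : IsPrefixReplacement g) (hh : IsPrefixReplacement h)
    (hord : ¬ IsOfFinOrder g) (r s : ℤ)
    (hconj : h⁻¹ * g ^ r * h = g ^ s) :
    |r| = |s| := by
  have h1 : r.natAbs ≤ s.natAbs := natAbs_le_of_conj hg hh.inv hord (by rw [inv_inv]; exact hconj)
  have h2 : s.natAbs ≤ r.natAbs := natAbs_le_of_conj hg hh hord (by rw [← hconj]; group)
  rw [Int.abs_eq_natAbs, Int.abs_eq_natAbs, le_antisymm h1 h2]
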